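/- Stationarity forces orthogonality to the potential-difference gradient (Lemma H.5(i) / Proposition cond_stationary(i)). Let b be an admissible vector field with global flow X and Jacobian factor J, and let U0, U1 : ℝ^d → ℝ be continuously differentiable. Let D ⊆ ℝ^d be open, and assume that for every x ∈ D: the integrals ∫_0^∞ F^0_t(x) dt, ∫_0^∞ F^1_t(x) dt, ∫_ℝ F^0_t(x) dt, ∫_ℝ F^1_t(x) dt are all finite, ∫_0^∞ F^0_t(x) dt > 0 and ∫_ℝ F^0_t(x) dt > 0, and the stationarity condition holds: (∫_0^∞ F^1_t(x) dt) / (∫_0^∞ F^0_t(x) dt) = A(x). Then for every x ∈ D, ⟨∇(U1 − U0)(x), b(x)⟩ = 0. -/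

import Mathlib

/-!
Write `F^k_t` for the two integrands. The cocycle identity `J (t + s) x = J t (X s x) * J s x` shows
that the integrands based at `X s x` are those based at `x`, translated by `s` in time and divided
by `J s x`. This factor cancels in quotients, so `A` is constant along orbits, and stationarity at
`X s x` reads `∫_{t > s} F^1_t(x) = A(x) ∫_{t > s} F^0_t(x)`. Differentiating in `s` near `0` gives
`F^1_s(x) = A(x) F^0_s(x)`; the Jacobian factor cancels once more, so `exp (-(U₁ - U₀))` is equal to
`A(x)` along the orbit near `x`, and the derivative of `U₁ - U₀` in the direction `b x` vanishes.
-/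

open MeasureTheory Filter

noncomputable section

/-- Euclidean state space ℝ^d. -/
abbrev Euc (d : ℕ) := EuclideanSpace ℝ (Fin d)

/-- Divergence of a vector field: trace of the Fréchet derivative. -/
def vdiv {d : ℕ} (b : Euc d → Euc d) (x : Euc d) : ℝ :=
  LinearMap.trace ℝ (Euc d) (fderiv ℝ b x).toLinearMap

/-- A vector field is admissible if it is C¹ with globally bounded derivative. -/
def Admissible {d : ℕ} (b : Euc d → Euc d) : Prop :=
  ContDiff ℝ 1 b ∧ ∃ C : ℝ, ∀ x, ‖fderiv ℝ b x‖ ≤ C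

/-- A global flow of the vector field `b`. -/
def IsGlobalFlow {d : ℕ} (b : Euc d → Euc d) (X : ℝ → Euc d → Euc d) : Prop :=
  (∀ x, X 0 x = x) ∧
  (∀ t s : ℝ, ∀ x, X (t + s) x = X t (X s x)) ∧
  (∀ x : Euc d, ∀ t : ℝ, HasDerivAt (fun τ => X τ x) (b (X t x)) t)

/-- Jacobian factor of the flow: J t x = exp(∫₀ᵗ div b(X s x) ds). -/
def Jac {d : ℕ} (b : Euc d → Euc d) (X : ℝ → Euc d → Euc d) (t : ℝ) (x : Euc d) : ℝ :=
  Real.exp (∫ s in (0:ℝ)..t, vdiv b (X s x))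

section Integrals

open Set

lemma integral_pos_of_ae_pos {α : Type*} [MeasurableSpace α] {μ : Measure α} {f : α → ℝ}
    (hμ : μ ≠ 0) (hi : Integrable f μ) (hf : ∀ᵐ t ∂μ, 0 < f t) : 0 < ∫ t, f t ∂μ := by
  have hsupp : Function.support f =ᵐ[μ] univ :=
    eventuallyEq_univ.2 <| hf.mono fun _ ht => ne_of_gt ht
  rw [integral_pos_iff_support_of_nonneg_ae (hf.mono fun _ ht => le_of_lt ht) hi,
    measure_congr hsupp]
  exact Measure.measure_univ_pos.2 hμ

variable {E : Type*} [NormedAddCommGroup E] [NormedSpace ℝ E]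

lemma integral_comp_add_right_Ioi (f : ℝ → E) (a s : ℝ) :
    ∫ t in Ioi a, f (t + s) = ∫ t in Ioi (a + s), f t := by
  have h := (measurePreserving_add_right (volume : Measure ℝ) s).setIntegral_preimage_emb
    (measurableEmbedding_addRight s) f (Ioi (a + s))
  rwa [preimage_add_const_Ioi, add_sub_cancel_right] at h

variable [CompleteSpace E]

lemma hasDerivAt_integral_Ioi {f : ℝ → E} {a s : ℝ} (hi : IntegrableOn f (Ioi a)) (has : a < s)
    (hc : ContinuousAt f s) : HasDerivAt (fun u => ∫ t in Ioi u, f t) (-f s) s := by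
  have hsplit : (fun u => ∫ t in Ioi u, f t) =ᶠ[nhds s]
      fun u => (∫ t in Ioi a, f t) - ∫ t in a..u, f t := by
    filter_upwards [Ioi_mem_nhds has] with u hu
    exact eq_sub_of_add_eq' <| intervalIntegral.integral_interval_add_Ioi hi
      (hi.mono_set (Ioi_subset_Ioi (le_of_lt hu)))
  have hint : IntervalIntegrable f volume a s :=
    (intervalIntegrable_iff_integrableOn_Ioc_of_le has.le).2 (hi.mono_set Ioc_subset_Ioi_self)
  have hmeas : StronglyMeasurableAtFilter f (nhds s) :=
    ⟨Ioi a, Ioi_mem_nhds has, hi.aestronglyMeasurable⟩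
  exact ((intervalIntegral.integral_hasDerivAt_right hint hmeas hc).const_sub
    _).congr_of_eventuallyEq hsplit

lemma eq_of_eventuallyEq_integral_Ioi {f g : ℝ → E} {a s : ℝ} (hf : IntegrableOn f (Ioi a))
    (hg : IntegrableOn g (Ioi a)) (has : a < s) (hfc : ContinuousAt f s) (hgc : ContinuousAt g s)
    (h : (fun u => ∫ t in Ioi u, f t) =ᶠ[nhds s] fun u => ∫ t in Ioi u, g t) : f s = g s :=
  neg_injective <| (hasDerivAt_integral_Ioi hf has hfc).unique <|
    (hasDerivAt_integral_Ioi hg has hgc).congr_of_eventuallyEq h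

end Integrals

section Cocycle

open Set

variable {α : Type*} {X : ℝ → α → α} {J : ℝ → α → ℝ}

/-- A positive multiplicative cocycle over `X`, continuous in time: the properties of the Jacobian
factor of a flow on which the stationarity argument depends. -/
structure IsPosCocycle (X : ℝ → α → α) (J : ℝ → α → ℝ) : Prop where
  pos : ∀ t x, 0 < J t x
  map_add : ∀ t s x, J (t + s) x = J t (X s x) * J s x
  continuous : ∀ x, Continuous fun t => J t x

lemma isPosCocycle_exp_integral {g : α → ℝ} (hX : ∀ t s x, X (t + s) x = X t (X s x))
    (hg : ∀ x, Continuous fun t => g (X t x)) :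
    IsPosCocycle X fun t x => Real.exp (∫ r in (0 : ℝ)..t, g (X r x)) where
  pos _ _ := Real.exp_pos _
  map_add t s x := by
    have htrans : ∫ r in (0 : ℝ)..t, g (X r (X s x)) = ∫ r in s..(t + s), g (X r x) := by
      simp only [← hX]
      rw [intervalIntegral.integral_comp_add_right fun r => g (X r x), zero_add]
    rw [← Real.exp_add, htrans, add_comm (∫ r in s..(t + s), _),
      intervalIntegral.integral_add_adjacent_intervals ((hg x).intervalIntegrable _ _)
        ((hg x).intervalIntegrable _ _)]
  continuous x := Real.continuous_exp.comp <|
    intervalIntegral.continuous_primitive (fun _ _ => (hg x).intervalIntegrable _ _) 0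

/-- The NEIS integrand `F_t(x) = exp (-U (X t x)) * J t x` of a potential `U`, with the time as its
last argument. -/
def neisWeight (X : ℝ → α → α) (J : ℝ → α → ℝ) (U : α → ℝ) (x : α) (t : ℝ) : ℝ :=
  Real.exp (-(U (X t x))) * J t x

/-- The infinite-time NEIS estimator `A(x)`. -/
def neisEstimator (X : ℝ → α → α) (J : ℝ → α → ℝ) (U₀ U₁ : α → ℝ) (x : α) : ℝ :=
  (∫ t, neisWeight X J U₁ x t) / ∫ t, neisWeight X J U₀ x t

/-- The stationarity condition at `x`: restricting both integrals of the infinite-time estimator to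
positive times does not change its value. -/
def IsStationaryAt (X : ℝ → α → α) (J : ℝ → α → ℝ) (U₀ U₁ : α → ℝ) (x : α) : Prop :=
  (∫ t in Ioi 0, neisWeight X J U₁ x t) / (∫ t in Ioi 0, neisWeight X J U₀ x t) =
    neisEstimator X J U₀ U₁ x

namespace IsPosCocycle

lemma neisWeight_pos (hJ : IsPosCocycle X J) (U : α → ℝ) (x : α) (t : ℝ) :
    0 < neisWeight X J U x t :=
  mul_pos (Real.exp_pos _) (hJ.pos t x)

lemma continuous_neisWeight (hJ : IsPosCocycle X J) {U : α → ℝ} {x : α}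
    (hU : Continuous fun t => U (X t x)) : Continuous (neisWeight X J U x) :=
  (Real.continuous_exp.comp hU.neg).mul (hJ.continuous x)

lemma neisWeight_flow (hJ : IsPosCocycle X J) (hX : ∀ t s x, X (t + s) x = X t (X s x))
    (U : α → ℝ) (s : ℝ) (x : α) (t : ℝ) :
    neisWeight X J U (X s x) t = (J s x)⁻¹ * neisWeight X J U x (t + s) := by
  rw [neisWeight, neisWeight, hX, hJ.map_add]
  field_simp [(hJ.pos s x).ne']

lemma integral_neisWeight_flow (hJ : IsPosCocycle X J) (hX : ∀ t s x, X (t + s) x = X t (X s x))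
    (U : α → ℝ) (s : ℝ) (x : α) :
    ∫ t, neisWeight X J U (X s x) t = (J s x)⁻¹ * ∫ t, neisWeight X J U x t := by
  simp only [hJ.neisWeight_flow hX, integral_const_mul]
  rw [integral_add_right_eq_self (neisWeight X J U x) s]

lemma integral_Ioi_neisWeight_flow (hJ : IsPosCocycle X J)
    (hX : ∀ t s x, X (t + s) x = X t (X s x)) (U : α → ℝ) (s : ℝ) (x : α) :
    ∫ t in Ioi 0, neisWeight X J U (X s x) t = (J s x)⁻¹ * ∫ t in Ioi s, neisWeight X J U x t := by
  simp only [hJ.neisWeight_flow hX, integral_const_mul]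
  rw [integral_comp_add_right_Ioi (neisWeight X J U x), zero_add]

lemma neisEstimator_flow (hJ : IsPosCocycle X J) (hX : ∀ t s x, X (t + s) x = X t (X s x))
    (U₀ U₁ : α → ℝ) (s : ℝ) (x : α) :
    neisEstimator X J U₀ U₁ (X s x) = neisEstimator X J U₀ U₁ x := by
  rw [neisEstimator, hJ.integral_neisWeight_flow hX, hJ.integral_neisWeight_flow hX,
    mul_div_mul_left _ _ (inv_ne_zero (hJ.pos s x).ne'), neisEstimator]

variable {U₀ U₁ : α → ℝ} {x : α}

lemma integral_Ioi_neisWeight_eq (hJ : IsPosCocycle X J)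
    (hX : ∀ t s x, X (t + s) x = X t (X s x)) {s : ℝ}
    (hi₀ : IntegrableOn (neisWeight X J U₀ x) (Ioi s))
    (hst : IsStationaryAt X J U₀ U₁ (X s x)) :
    ∫ t in Ioi s, neisWeight X J U₁ x t =
      neisEstimator X J U₀ U₁ x * ∫ t in Ioi s, neisWeight X J U₀ x t := by
  have hpos : 0 < ∫ t in Ioi s, neisWeight X J U₀ x t :=
    integral_pos_of_ae_pos (by simp) hi₀ (.of_forall (hJ.neisWeight_pos U₀ x))
  rw [IsStationaryAt, hJ.integral_Ioi_neisWeight_flow hX, hJ.integral_Ioi_neisWeight_flow hX,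
    mul_div_mul_left _ _ (inv_ne_zero (hJ.pos s x).ne'), hJ.neisEstimator_flow hX] at hst
  exact (div_eq_iff hpos.ne').1 hst

lemma neisWeight_eq_neisEstimator_mul (hJ : IsPosCocycle X J)
    (hX : ∀ t s x, X (t + s) x = X t (X s x)) (hU₀ : Continuous fun t => U₀ (X t x))
    (hU₁ : Continuous fun t => U₁ (X t x)) (hi₀ : Integrable (neisWeight X J U₀ x))
    (hi₁ : Integrable (neisWeight X J U₁ x)) {s : ℝ}
    (hst : ∀ᶠ u in nhds s, IsStationaryAt X J U₀ U₁ (X u x)) :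
    neisWeight X J U₁ x s = neisEstimator X J U₀ U₁ x * neisWeight X J U₀ x s := by
  refine eq_of_eventuallyEq_integral_Ioi hi₁.integrableOn (hi₀.const_mul _).integrableOn
    (sub_one_lt s) (hJ.continuous_neisWeight hU₁).continuousAt
    ((hJ.continuous_neisWeight hU₀).const_mul _).continuousAt ?_
  filter_upwards [hst] with u hu
  rw [integral_const_mul, hJ.integral_Ioi_neisWeight_eq hX hi₀.integrableOn hu]

lemma exp_neg_sub_eq_neisEstimator (hJ : IsPosCocycle X J)
    (hX : ∀ t s x, X (t + s) x = X t (X s x)) (hU₀ : Continuous fun t => U₀ (X t x))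
    (hU₁ : Continuous fun t => U₁ (X t x)) (hi₀ : Integrable (neisWeight X J U₀ x))
    (hi₁ : Integrable (neisWeight X J U₁ x)) {s : ℝ}
    (hst : ∀ᶠ u in nhds s, IsStationaryAt X J U₀ U₁ (X u x)) :
    Real.exp (-(U₁ (X s x) - U₀ (X s x))) = neisEstimator X J U₀ U₁ x := by
  have h := hJ.neisWeight_eq_neisEstimator_mul hX hU₀ hU₁ hi₀ hi₁ hst
  rw [neisWeight, neisWeight, ← mul_assoc] at h
  rw [neg_sub', Real.exp_sub, div_eq_iff (Real.exp_ne_zero _)]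
  exact mul_right_cancel₀ (hJ.pos s x).ne' h

end IsPosCocycle

end Cocycle

theorem stmt_17_general {E : Type*} [NormedAddCommGroup E] [NormedSpace ℝ E] {X : ℝ → E → E}
    {J : ℝ → E → ℝ} {U₀ U₁ : E → ℝ} {x v : E} (hX₀ : X 0 x = x)
    (hX : ∀ t s x, X (t + s) x = X t (X s x)) (hv : HasDerivAt (fun t => X t x) v 0)
    (hJ : IsPosCocycle X J) (hU₀ : Continuous fun t => U₀ (X t x))
    (hU₁ : Continuous fun t => U₁ (X t x)) (hU : DifferentiableAt ℝ (fun y => U₁ y - U₀ y) x)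
    (hi₀ : Integrable (neisWeight X J U₀ x)) (hi₁ : Integrable (neisWeight X J U₁ x))
    (hst : ∀ᶠ s in nhds 0, IsStationaryAt X J U₀ U₁ (X s x)) :
    fderiv ℝ (fun y => U₁ y - U₀ y) x v = 0 := by
  have hconst : (fun s => U₁ (X s x) - U₀ (X s x)) =ᶠ[nhds 0]
      fun _ => -Real.log (neisEstimator X J U₀ U₁ x) := by
    filter_upwards [hst.eventually_nhds] with s hs
    rw [← hJ.exp_neg_sub_eq_neisEstimator hX hU₀ hU₁ hi₀ hi₁ hs, Real.log_exp, neg_neg]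
  have hchain : HasDerivAt (fun s => U₁ (X s x) - U₀ (X s x))
      (fderiv ℝ (fun y => U₁ y - U₀ y) x v) 0 :=
    hU.hasFDerivAt.comp_hasDerivAt_of_eq 0 hv hX₀.symm
  exact hchain.unique ((hasDerivAt_const _ _).congr_of_eventuallyEq hconst)

section EuclideanFlow

variable {d : ℕ} {b : Euc d → Euc d} {X : ℝ → Euc d → Euc d}

lemma continuous_vdiv (hb : ContDiff ℝ 1 b) : Continuous (vdiv b) :=
  ((LinearMap.trace ℝ (Euc d)).comp
    (ContinuousLinearMap.coeLM ℝ)).continuous_of_finiteDimensional.comp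
      (hb.continuous_fderiv one_ne_zero)

namespace IsGlobalFlow

lemma continuous (hX : IsGlobalFlow b X) (x : Euc d) : Continuous fun t => X t x :=
  continuous_iff_continuousAt.2 fun t => (hX.2.2 x t).continuousAt

lemma eventually_mem (hX : IsGlobalFlow b X) {D : Set (Euc d)} (hD : IsOpen D) {x : Euc d}
    (hx : x ∈ D) : ∀ᶠ s in nhds 0, X s x ∈ D :=
  (hX.continuous x).continuousAt.eventually_mem (hD.mem_nhds (by rwa [hX.1]))

lemma hasDerivAt_zero (hX : IsGlobalFlow b X) (x : Euc d) :
    HasDerivAt (fun t => X t x) (b x) 0 := by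
  simpa only [hX.1] using hX.2.2 x 0

lemma isPosCocycle_jac (hX : IsGlobalFlow b X) (hb : Continuous (vdiv b)) :
    IsPosCocycle X (Jac b X) :=
  isPosCocycle_exp_integral hX.2.1 fun x => hb.comp (hX.continuous x)

end IsGlobalFlow

end EuclideanFlow

/-- Stationarity forces orthogonality to the potential-difference gradient
(Lemma H.5(i) / Proposition cond_stationary(i)). -/
theorem stmt_17 {d : ℕ} (hd : 0 < d)
    (b : Euc d → Euc d) (hb : Admissible b)
    (X : ℝ → Euc d → Euc d) (hX : IsGlobalFlow b X)
    (U0 U1 : Euc d → ℝ) (hU0 : ContDiff ℝ 1 U0) (hU1 : ContDiff ℝ 1 U1)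
    (D : Set (Euc d)) (hD : IsOpen D)
    (hhyp : ∀ x ∈ D,
      IntegrableOn (fun t : ℝ => Real.exp (-(U0 (X t x))) * Jac b X t x) (Set.Ioi 0) ∧
      IntegrableOn (fun t : ℝ => Real.exp (-(U1 (X t x))) * Jac b X t x) (Set.Ioi 0) ∧
      Integrable (fun t : ℝ => Real.exp (-(U0 (X t x))) * Jac b X t x) ∧
      Integrable (fun t : ℝ => Real.exp (-(U1 (X t x))) * Jac b X t x) ∧
      0 < (∫ t in Set.Ioi (0:ℝ), Real.exp (-(U0 (X t x))) * Jac b X t x) ∧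
      0 < (∫ t : ℝ, Real.exp (-(U0 (X t x))) * Jac b X t x) ∧
      (∫ t in Set.Ioi (0:ℝ), Real.exp (-(U1 (X t x))) * Jac b X t x) /
          (∫ t in Set.Ioi (0:ℝ), Real.exp (-(U0 (X t x))) * Jac b X t x) =
        (∫ t : ℝ, Real.exp (-(U1 (X t x))) * Jac b X t x) /
          (∫ t : ℝ, Real.exp (-(U0 (X t x))) * Jac b X t x)) :
    ∀ x ∈ D, @inner ℝ _ _ (gradient (fun y => U1 y - U0 y) x) (b x) = (0 : ℝ) := by
  intro x hx
  obtain ⟨-, -, hi0, hi1, -⟩ := hhyp x hx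
  have hst : ∀ᶠ s in nhds 0, IsStationaryAt X (Jac b X) U0 U1 (X s x) := by
    filter_upwards [hX.eventually_mem hD hx] with s hs
    obtain ⟨-, -, -, -, -, -, hstat⟩ := hhyp (X s x) hs
    exact hstat
  rw [inner_gradient_left]
  exact stmt_17_general (hX.1 x) hX.2.1 (hX.hasDerivAt_zero x)
    (hX.isPosCocycle_jac (continuous_vdiv hb.1)) (hU0.continuous.comp (hX.continuous x))
    (hU1.continuous.comp (hX.continuous x))
    ((hU1.sub hU0).differentiable one_ne_zero).differentiableAt hi0 hi1 hst
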